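/- Let R be a commutative ring, G an abelian group, and RG the group ring of G over R; regard R as an RG-module via the augmentation map RG → R sending each element of G to 1. Suppose that R has projective dimension at most r as an RG-module, for some nonnegative integer r. Then every RG-module that is projective as an R-module has projective dimension at most r over RG. -/

import Mathlib

open CategoryTheory

noncomputable section

universe u

/-- The `j`-th Ext group of the `R`-modules `M` and `N`. -/
def extGroup (R : Type u) [CommRing R] (M N : ModuleCat.{u} R) (j : ℕ) : ModuleCat R :=
  ((Ext R (ModuleCat.{u} R) j).obj (Opposite.op M)).obj N

/-- `Ext_R^j(M, N) = 0`. -/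
def ExtVanish (R : Type u) [CommRing R] (M N : ModuleCat.{u} R) (j : ℕ) : Prop :=
  Subsingleton (extGroup R M N j)

/-- The projective dimension of `M` is at most `n`
(via the standard Ext-vanishing characterization). -/
def ProjDimLE (R : Type u) [CommRing R] (M : ModuleCat.{u} R) (n : ℕ) : Prop :=
  ∀ (N : ModuleCat.{u} R) (j : ℕ), n < j → ExtVanish R M N j

/-- `M` has finite projective dimension. -/
def HasFinProjDim (R : Type u) [CommRing R] (M : ModuleCat.{u} R) : Prop :=
  ∃ n, ProjDimLE R M n

/-- `R` is a coherent ring: every finitely generated ideal is finitely presented. -/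
def IsCoherentRing (R : Type u) [CommRing R] : Prop :=
  ∀ I : Ideal R, I.FG → Module.FinitePresentation R I
/-- The augmentation ring homomorphism `RG → R`, sending each element of `G` to `1`. -/
def augmentation (R : Type u) [CommRing R] (G : Type u) [CommGroup G] :
    MonoidAlgebra R G →+* R :=
  ((MonoidAlgebra.lift R R G) 1).toRingHom

/-!
The representation-theoretic form of the statement is that tensoring with `A` over `R`, with
diagonal `G`-action, turns a projective resolution of the trivial representation into one of `A`.
If `A` is projective over `R`, then `A ⊗ -` is exact. Its right adjoint `Hom_R(A, -)`, with the
conjugation action, is computed on underlying `R`-modules and so preserves epimorphisms; hence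
`A ⊗ -` preserves projectives and does not raise projective dimension. Since `A ⊗ R ≅ A`, the
projective dimension of `A` is at most that of `R`.
-/

open Limits MonoidalCategory MonoidAlgebra

section ExtComparison

universe w v'

variable {R : Type*} [Ring R] {C : Type u} [Category.{v'} C] [Abelian C] {X : C}

lemma isZero_ext_succ_iff_forall_exists_d_comp [Linear R C] [EnoughProjectives C]
    (P : ProjectiveResolution X) (Y : C) (n : ℕ) :
    IsZero (((Ext R C (n + 1)).obj (Opposite.op X)).obj Y) ↔
      ∀ f : P.complex.X (n + 1) ⟶ Y, P.complex.d (n + 2) (n + 1) ≫ f = 0 →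
        ∃ g : P.complex.X n ⟶ Y, P.complex.d (n + 1) n ≫ g = f := by
  rw [(P.isoExt (R := R) (n + 1) Y).isZero_iff,
    ← HomologicalComplex.exactAt_iff_isZero_homology,
    HomologicalComplex.exactAt_iff' _ n (n + 1) (n + 2) (by simp) (by simp),
    ShortComplex.moduleCat_exact_iff]
  rfl

lemma subsingleton_abelianExt_succ_iff_forall_exists_d_comp [HasExt.{w} C]
    (P : ProjectiveResolution X) (Y : C) (n : ℕ) :
    Subsingleton (Abelian.Ext X Y (n + 1)) ↔
      ∀ f : P.complex.X (n + 1) ⟶ Y, P.complex.d (n + 2) (n + 1) ≫ f = 0 →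
        ∃ g : P.complex.X n ⟶ Y, P.complex.d (n + 1) n ≫ g = f := by
  refine ⟨fun _ f hf ↦ (P.extMk_eq_zero_iff f (n + 2) rfl hf n rfl).1 (Subsingleton.elim _ _),
    fun h ↦ subsingleton_of_forall_eq 0 fun e ↦ ?_⟩
  obtain ⟨f, hf, rfl⟩ := P.extMk_surjective e (n + 2) rfl
  exact (P.extMk_eq_zero_iff f (n + 2) rfl hf n rfl).2 (h f hf)

end ExtComparison

section ProjDimLE

variable {R : Type u} [CommRing R] {M N : ModuleCat.{u} R} {n : ℕ}

lemma extVanish_succ_iff_subsingleton_abelianExt :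
    ExtVanish R M N (n + 1) ↔ Subsingleton (Abelian.Ext.{u} M N (n + 1)) := by
  let P := projectiveResolution M
  rw [ExtVanish, extGroup, ← ModuleCat.isZero_iff_subsingleton,
    isZero_ext_succ_iff_forall_exists_d_comp P,
    subsingleton_abelianExt_succ_iff_forall_exists_d_comp P]

lemma projDimLE_iff_hasProjectiveDimensionLE :
    ProjDimLE R M n ↔ HasProjectiveDimensionLE M n := by
  rw [HasProjectiveDimensionLE, hasProjectiveDimensionLT_iff]
  constructor
  · rintro h (_ | i) hi N e
    · omega
    · have := extVanish_succ_iff_subsingleton_abelianExt.1 (h N (i + 1) hi)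
      exact Subsingleton.elim _ _
  · rintro h N (_ | i) hi
    · omega
    · exact extVanish_succ_iff_subsingleton_abelianExt.2
        (subsingleton_of_forall_eq 0 fun e ↦ h _ hi e)

end ProjDimLE

section Functor

universe u₁ u₂ v₁ v₂

variable {C : Type u₁} [Category.{v₁} C] [Abelian C] [EnoughProjectives C]
  {D : Type u₂} [Category.{v₂} D] [Abelian D]

lemma hasProjectiveDimensionLE_map (F : C ⥤ D) [F.PreservesZeroMorphisms] [F.PreservesHomology]
    [F.PreservesProjectiveObjects] {X : C} {n : ℕ} (hX : HasProjectiveDimensionLE X n) :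
    HasProjectiveDimensionLE (F.obj X) n := by
  induction n generalizing X with
  | zero =>
    rw [← projective_iff_hasProjectiveDimensionLE_zero] at hX ⊢
    exact F.projective_obj X
  | succ n ih =>
    obtain ⟨P⟩ := EnoughProjectives.presentation X
    let S := ShortComplex.mk _ _ (kernel.condition P.f)
    have hS : S.ShortExact := { exact := ShortComplex.exact_kernel P.f }
    have := hS.mono_f
    have := hS.epi_g
    have hFS : (S.map F).ShortExact := hS.map F
    have hFP : Projective (S.map F).X₂ := F.projective_obj P.p
    have hK := (hS.hasProjectiveDimensionLT_X₃_iff n P.projective).1 hX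
    exact (hFS.hasProjectiveDimensionLT_X₃_iff n hFP).2 (ih hK)

lemma hasProjectiveDimensionLE_map_iff_of_isEquivalence (F : C ⥤ D) [F.IsEquivalence]
    {X : C} {n : ℕ} :
    HasProjectiveDimensionLE (F.obj X) n ↔ HasProjectiveDimensionLE X n := by
  refine ⟨fun h ↦ ?_, hasProjectiveDimensionLE_map F⟩
  have : EnoughProjectives D := F.asEquivalence.enoughProjectives_iff.1 inferInstance
  have : HasProjectiveDimensionLE (F.inv.obj (F.obj X)) n := hasProjectiveDimensionLE_map F.inv h
  exact @hasProjectiveDimensionLT_of_iso _ _ _ _ _ (F.asEquivalence.unitIso.app X).symm _ this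

end Functor

section Representation

universe v

variable {k : Type u} {G : Type v} [CommRing k] [Group G] (A : Rep.{u} k G)

instance tensorLeft_preservesHomology_of_flat [Module.Flat k A] :
    (tensorLeft A).PreservesHomology := by
  have : (tensorLeft A).IsLeftAdjoint := (ihom.adjunction A).isLeftAdjoint
  have : (tensorLeft A).PreservesMonomorphisms :=
    ⟨fun f hf ↦ (Rep.mono_iff_injective _).2 <|
      Module.Flat.lTensor_preserves_injective_linearMap (M := A) f.hom.toLinearMap
        ((Rep.mono_iff_injective f).1 hf)⟩
  exact Functor.preservesHomology_of_preservesMonos_and_cokernels _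

instance ihom_preservesEpimorphisms_of_projective [Module.Projective k A] :
    (ihom A).PreservesEpimorphisms where
  preserves {Y Z} f hf := by
    refine (Rep.epi_iff_surjective _).2 fun (g : A →ₗ[k] Z) ↦ ?_
    obtain ⟨h, hh⟩ :=
      Module.projective_lifting_property f.hom.toLinearMap g ((Rep.epi_iff_surjective f).1 hf)
    exact ⟨h, hh⟩

instance tensorLeft_preservesProjectiveObjects_of_projective [Module.Projective k A] :
    (tensorLeft A).PreservesProjectiveObjects where
  projective_obj {X} hX := (ihom.adjunction A).map_projective X hX

lemma hasProjectiveDimensionLE_of_tensorUnit {k G : Type u} [CommRing k] [Group G]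
    {A : Rep.{u} k G} [Module.Projective k A] {n : ℕ}
    (h : HasProjectiveDimensionLE (𝟙_ (Rep.{u} k G)) n) : HasProjectiveDimensionLE A n := by
  have : HasProjectiveDimensionLE (A ⊗ 𝟙_ (Rep.{u} k G)) n :=
    hasProjectiveDimensionLE_map (tensorLeft A) h
  exact hasProjectiveDimensionLT_of_iso (ρ_ A) _

end Representation

section MonoidRing

variable (R : Type u) (G : Type*) [CommRing R] [Monoid G]

/-- The ring `R` as a module over the monoid ring `R[G]` via the augmentation, which sends each
element of `G` to `1`. The ring homomorphism is spelled out because `augmentation` is only defined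
for commutative groups. -/
def trivialModule : ModuleCat.{u} R[G] :=
  (ModuleCat.restrictScalars ((MonoidAlgebra.lift R R G) 1).toRingHom).obj (ModuleCat.of R R)

/-- The identity map, from `R` as an `R[G]`-module to `R` as a ring. -/
def trivialModuleEquiv : trivialModule R G ≃+ R :=
  AddEquiv.refl R

variable {R G} in
lemma trivialModuleEquiv_smul (a : R[G]) (x : trivialModule R G) :
    trivialModuleEquiv R G (a • x) = MonoidAlgebra.lift R R G 1 a * trivialModuleEquiv R G x :=
  rfl

variable {R G} in
lemma trivialModuleEquiv_single_smul (g : G) (r : R) (x : trivialModule R G) :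
    trivialModuleEquiv R G (MonoidAlgebra.single g r • x) = r * trivialModuleEquiv R G x := by
  rw [trivialModuleEquiv_smul]
  simp

/-- The representation attached to `trivialModule R G` is trivial. -/
def ofModuleMonoidAlgebraTrivialModuleEquiv :
    (Rep.ofModuleMonoidAlgebra.obj (trivialModule R G)).ρ.Equiv (Representation.trivial R G R) :=
  .mk
    { trivialModuleEquiv R G with
      map_smul' r (x : trivialModule R G) := trivialModuleEquiv_single_smul 1 r x }
    fun g ↦ LinearMap.ext fun (x : trivialModule R G) ↦
      (trivialModuleEquiv_single_smul g 1 x).trans (one_mul (trivialModuleEquiv R G x))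

/-- The representation attached to `trivialModule R G` is the unit for the tensor product. -/
def ofModuleMonoidAlgebraTrivialModuleIso :
    Rep.ofModuleMonoidAlgebra.obj (trivialModule R G) ≅ 𝟙_ (Rep.{u} R G) :=
  (Rep.mkIso (ofModuleMonoidAlgebraTrivialModuleEquiv R G) :)

end MonoidRing

theorem stmt11_general (R : Type u) [CommRing R] (G : Type u) [Group G] (r : ℕ)
    (hr : HasProjectiveDimensionLE (trivialModule R G) r) (M : ModuleCat.{u} R[G])
    (hM : Module.Projective R ((ModuleCat.restrictScalars (algebraMap R R[G])).obj M)) :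
    HasProjectiveDimensionLE M r := by
  have hr' : HasProjectiveDimensionLE (Rep.ofModuleMonoidAlgebra.obj (trivialModule R G)) r :=
    hasProjectiveDimensionLE_map _ hr
  have : Module.Projective R (Rep.ofModuleMonoidAlgebra.obj M) := hM
  have hunit : HasProjectiveDimensionLE (𝟙_ (Rep.{u} R G)) r :=
    hasProjectiveDimensionLT_of_iso (ofModuleMonoidAlgebraTrivialModuleIso R G) _
  have hA : HasProjectiveDimensionLE (Rep.ofModuleMonoidAlgebra.obj M) r :=
    hasProjectiveDimensionLE_of_tensorUnit hunit
  exact (hasProjectiveDimensionLE_map_iff_of_isEquivalence _).1 hA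

theorem stmt11 (R : Type u) [CommRing R] (G : Type u) [CommGroup G] (r : ℕ)
    (hr : letI : Module (MonoidAlgebra R G) R := Module.compHom R (augmentation R G)
      ProjDimLE (MonoidAlgebra R G) (ModuleCat.of (MonoidAlgebra R G) R) r) :
    ∀ (M : ModuleCat.{u} (MonoidAlgebra R G)),
      (letI : Module R M := Module.compHom M (algebraMap R (MonoidAlgebra R G));
        Module.Projective R M) →
      ProjDimLE (MonoidAlgebra R G) M r := fun M hM ↦
  projDimLE_iff_hasProjectiveDimensionLE.2
    (stmt11_general R G r (projDimLE_iff_hasProjectiveDimensionLE.1 hr) M hM)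

end
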